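/- Let H be the complete s-uniform t-partite hypergraph with sides V_1, …, V_t, and suppose H is m-balanced for some m ≥ 1, i.e., |V_i| = m for every i. Then the height of the edge ideal I(H) equals m(t−s+1) and the Krull dimension of R/I(H) equals m(s−1). -/

import Mathlib

open Finset

/-- The vertex set `V = V_1 ∪ ⋯ ∪ V_t` of the multipartite hypergraph with sides `Vs`. -/
def vertexSet {α : Type*} [DecidableEq α] {t : ℕ} (Vs : Fin t → Finset α) : Finset α :=
  Finset.univ.biUnion Vs

/-- `e` is an edge of the complete `s`-uniform `t`-partite hypergraph with sides `Vs`: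
`e ⊆ V`, `|e| = s`, and `|e ∩ V_i| ≤ 1` for every side. -/
def IsEdge {α : Type*} [DecidableEq α] {t : ℕ} (Vs : Fin t → Finset α) (s : ℕ)
    (e : Finset α) : Prop :=
  e ⊆ vertexSet Vs ∧ e.card = s ∧ ∀ i : Fin t, (e ∩ Vs i).card ≤ 1

/-- `F` is an independent set: a subset of `V` containing no edge. -/
def Indep {α : Type*} [DecidableEq α] {t : ℕ} (Vs : Fin t → Finset α) (s : ℕ)
    (F : Finset α) : Prop :=
  F ⊆ vertexSet Vs ∧ ∀ e : Finset α, IsEdge Vs s e → ¬ e ⊆ F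

/-- The edge ideal `I(H) = (∏_{v ∈ e} x_v : e ∈ E(H))` of the complete `s`-uniform
`t`-partite hypergraph, in the polynomial ring `K[x_v : v ∈ α]`. -/
noncomputable def edgeIdeal (K : Type*) [Field K] {α : Type*} [DecidableEq α] {t : ℕ}
    (Vs : Fin t → Finset α) (s : ℕ) : Ideal (MvPolynomial α K) :=
  Ideal.span {m : MvPolynomial α K |
    ∃ e : Finset α, IsEdge Vs s e ∧ m = ∏ v ∈ e, MvPolynomial.X v}

/-- The height of an ideal: the infimum of the heights (in the prime spectrum, ordered
by inclusion) of the primes minimal over it. -/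
noncomputable def idealHeight {R : Type*} [CommRing R] (I : Ideal R) : ℕ∞ :=
  ⨅ (p : PrimeSpectrum R) (_ : p.asIdeal ∈ I.minimalPrimes), Order.height p

/-!
A prime containing a squarefree monomial ideal contains one variable from each generator, so the
variables it contains form a vertex cover `C` of the underlying hypergraph, and it contains the
prime `(x_v : v ∈ C)` of height `|C|`. The height is therefore the size of a minimum vertex cover.
A prime `(x_v : v ∈ C)` has quotient a polynomial ring in the remaining variables, which bounds the
dimension of the quotient below, while `ht I + dim R/I ≤ dim R` bounds it above.

A set `C` covers the complete `s`-uniform multipartite hypergraph exactly when fewer than `s` sides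
stick out of `C`: otherwise `s` vertices outside `C` on distinct sides form an uncovered edge. Hence
a minimum vertex cover is the union of the `t - s + 1` smallest sides.
-/

section Height

variable {R : Type*} [CommRing R]

lemma idealHeight_eq_height (I : Ideal R) : idealHeight I = I.height := by
  rw [I.height_eq_inf_minimalPrimes]
  refine le_antisymm (le_iInf₂ fun p hp ↦ ?_) (le_iInf₂ fun p hp ↦ ?_)
  · let q : PrimeSpectrum R := ⟨p, hp.1.1⟩
    exact iInf₂_le_of_le q hp q.height_eq_orderHeight.ge
  · rw [← PrimeSpectrum.height_eq_orderHeight]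
    exact iInf₂_le p.asIdeal hp

lemma height_add_ringKrullDim_quotient_le (I : Ideal R) :
    I.height + ringKrullDim (R ⧸ I) ≤ ringKrullDim R := by
  rcases eq_or_ne I ⊤ with rfl | hI
  · have : Subsingleton (R ⧸ (⊤ : Ideal R)) := Ideal.Quotient.subsingleton_iff.mpr rfl
    simp [ringKrullDim_eq_bot_of_subsingleton]
  obtain ⟨M, hM, hIM⟩ := I.exists_le_maximal hI
  have : Nonempty (PrimeSpectrum.zeroLocus (I : Set R)) := ⟨⟨M, hM.isPrime⟩, hIM⟩
  have : Nonempty (PrimeSpectrum R) := ⟨⟨M, hM.isPrime⟩⟩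
  rw [ringKrullDim_quotient, ringKrullDim, Order.krullDim_eq_iSup_coheight_of_nonempty,
    Order.krullDim_eq_iSup_height_add_coheight_of_nonempty, ← WithBot.coe_add,
    WithBot.coe_le_coe, ENat.add_iSup]
  refine iSup_le fun p ↦ le_iSup_of_le p.1 (add_le_add ?_ ?_)
  · rw [← PrimeSpectrum.height_eq_orderHeight]
    exact Ideal.height_mono p.2
  · exact Order.coheight_le_coheight_apply_of_strictMono Subtype.val (fun _ _ h ↦ h) p

end Height

section VariableIdeals

open MvPolynomial

variable {σ R : Type*} [CommRing R]

lemma ker_killCompl {τ : Type*} {f : τ → σ} (hf : Function.Injective f) :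
    RingHom.ker (killCompl (R := R) hf) = Ideal.span (X '' (Set.range f)ᶜ) := by
  apply le_antisymm
  · intro p hp
    refine mem_ideal_span_X_image.mpr fun d hd ↦ ?_
    by_contra! hrange
    have hsupp : (d.support : Set σ) ⊆ Set.range f := fun v hv ↦
      not_not.mp fun hv' ↦ Finsupp.mem_support_iff.mp hv (hrange v hv')
    apply mem_support_iff.mp hd
    rw [← Finsupp.mapDomain_comapDomain f hf d hsupp, ← coeff_killCompl hf,
      RingHom.mem_ker.mp hp, coeff_zero]
  · rw [Ideal.span_le]
    rintro _ ⟨v, hv, rfl⟩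
    exact (aeval_X _ v).trans (dif_neg hv)

lemma ker_killCompl_compl (s : Set σ) :
    RingHom.ker (killCompl (R := R) (Subtype.val_injective (p := (· ∈ sᶜ)))) =
      Ideal.span (X '' s) := by
  rw [ker_killCompl, Subtype.range_val_subtype, Set.ofPred_mem_eq, compl_compl]

lemma X_mem_span_X_image_iff [Nontrivial R] {s : Set σ} {v : σ} :
    (X v : MvPolynomial σ R) ∈ Ideal.span (X '' s) ↔ v ∈ s := by
  classical
  simp [mem_ideal_span_X_image, support_X, Finsupp.single_apply]

lemma ringKrullDim_quotient_span_X_image [Finite σ] [IsNoetherianRing R] (s : Set σ) :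
    ringKrullDim (MvPolynomial σ R ⧸ Ideal.span (X '' s : Set (MvPolynomial σ R))) =
      ringKrullDim R + sᶜ.ncard := by
  let φ : MvPolynomial σ R →ₐ[R] MvPolynomial ↥sᶜ R := killCompl Subtype.val_injective
  have hφ : Function.Surjective φ := fun p ↦ ⟨rename Subtype.val p, killCompl_rename_app _ p⟩
  let e : (MvPolynomial σ R ⧸ Ideal.span (X '' s : Set (MvPolynomial σ R))) ≃+*
      MvPolynomial ↥sᶜ R :=
    (Ideal.quotEquivOfEq (ker_killCompl_compl s).symm).trans
      (RingHom.quotientKerEquivOfSurjective (f := φ.toRingHom) hφ)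
  rw [ringKrullDim_eq_of_ringEquiv e, ringKrullDim_of_isNoetherianRing, Nat.card_coe_set_eq]

variable [IsDomain R]

lemma isPrime_span_X_image (s : Set σ) :
    (Ideal.span (X '' s : Set (MvPolynomial σ R))).IsPrime := by
  rw [← ker_killCompl_compl]
  exact RingHom.ker_isPrime _

lemma card_le_height_span_X_image (C : Finset σ) :
    #C ≤ (Ideal.span (X '' (C : Set σ) : Set (MvPolynomial σ R))).height := by
  classical
  induction C using Finset.induction_on with
  | empty => simp
  | insert a C ha ih =>
    rw [card_insert_of_notMem ha, coe_insert]
    have := isPrime_span_X_image (R := R) (C : Set σ)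
    have := isPrime_span_X_image (R := R) (insert a (C : Set σ))
    have hlt : Ideal.span (X '' (C : Set σ) : Set (MvPolynomial σ R)) <
        Ideal.span (X '' insert a (C : Set σ)) := by
      refine (Ideal.span_mono (Set.image_mono (Set.subset_insert _ _))).lt_of_not_ge fun hle ↦ ha ?_
      exact X_mem_span_X_image_iff.mp
        (hle (Ideal.subset_span (Set.mem_image_of_mem X (Set.mem_insert a _))))
    exact (add_le_add_left ih 1).trans (Ideal.height_add_one_le_of_lt_of_isPrime hlt)

lemma height_span_X_image [Finite σ] [IsNoetherianRing R] (C : Finset σ) :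
    (Ideal.span (X '' (C : Set σ) : Set (MvPolynomial σ R))).height = #C := by
  classical
  refine le_antisymm ?_ (card_le_height_span_X_image C)
  have := isPrime_span_X_image (R := R) (C : Set σ)
  rw [← coe_image] at this ⊢
  refine (Ideal.height_le_card_of_mem_minimalPrimes_span_finset ?_).trans
    (by exact_mod_cast card_image_le (s := C) (f := X))
  rw [Ideal.minimalPrimes_eq_subsingleton_self]
  rfl

end VariableIdeals

section Hypergraph

open MvPolynomial

variable {σ : Type*}

/-- The edge ideal of an arbitrary hypergraph, given by its set `E` of (finite) edges; these are
exactly the squarefree monomial ideals. -/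
noncomputable def hypergraphIdeal (R : Type*) [CommRing R] (E : Set (Finset σ)) :
    Ideal (MvPolynomial σ R) :=
  Ideal.span ((fun e ↦ ∏ v ∈ e, X v) '' E)

/-- `C` is a vertex cover (transversal) of the hypergraph with edge set `E`. -/
def IsVertexCover (E : Set (Finset σ)) (C : Set σ) : Prop :=
  ∀ e ∈ E, ∃ v ∈ e, v ∈ C

/-- `C` is a vertex cover of least cardinality; its size is the covering number of the hypergraph
with edge set `E`. -/
def IsMinimumVertexCover (E : Set (Finset σ)) (C : Finset σ) : Prop :=
  IsVertexCover E C ∧ ∀ D : Finset σ, IsVertexCover E D → #C ≤ #D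

variable {R : Type*} [CommRing R] {E : Set (Finset σ)}

lemma hypergraphIdeal_le_iff {p : Ideal (MvPolynomial σ R)} (hp : p.IsPrime) :
    hypergraphIdeal R E ≤ p ↔ IsVertexCover E {v | X v ∈ p} := by
  simp only [hypergraphIdeal, Ideal.span_le, Set.image_subset_iff, IsVertexCover,
    Set.mem_ofPred_eq, ← hp.prod_mem_iff]
  rfl

variable [IsDomain R]

lemma hypergraphIdeal_le_span_X_image_iff {C : Set σ} :
    hypergraphIdeal R E ≤ Ideal.span (X '' C) ↔ IsVertexCover E C := by
  simp only [hypergraphIdeal_le_iff (isPrime_span_X_image C), X_mem_span_X_image_iff,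
    Set.ofPred_mem_eq]

variable [IsNoetherianRing R] {C : Finset σ}

theorem height_hypergraphIdeal [Finite σ] (hC : IsMinimumVertexCover E C) :
    (hypergraphIdeal R E).height = #C := by
  apply le_antisymm
  · rw [← height_span_X_image (R := R) C]
    exact Ideal.height_mono (hypergraphIdeal_le_span_X_image_iff.mpr hC.1)
  · rw [Ideal.height_eq_inf_minimalPrimes]
    refine le_iInf₂ fun p hp ↦ ?_
    obtain ⟨D, hD⟩ := {v | (X v : MvPolynomial σ R) ∈ p}.toFinite.exists_finset_coe
    have hcover : IsVertexCover E (D : Set σ) := by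
      rw [hD]
      exact (hypergraphIdeal_le_iff hp.1.1).mp hp.1.2
    have hDp : Ideal.span (X '' (D : Set σ) : Set (MvPolynomial σ R)) ≤ p := by
      rw [hD, Ideal.span_le, Set.image_subset_iff]
      exact subset_rfl
    calc (#C : ℕ∞) ≤ #D := by exact_mod_cast hC.2 D hcover
      _ ≤ (Ideal.span (X '' (D : Set σ) : Set (MvPolynomial σ R))).height :=
        card_le_height_span_X_image D
      _ ≤ p.height := Ideal.height_mono hDp

theorem ringKrullDim_quotient_hypergraphIdeal [Fintype σ] [DecidableEq σ]
    (hC : IsMinimumVertexCover E C) :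
    ringKrullDim (MvPolynomial σ R ⧸ hypergraphIdeal R E) = ringKrullDim R + #Cᶜ := by
  apply le_antisymm
  · have h := height_add_ringKrullDim_quotient_le (hypergraphIdeal R E)
    rw [height_hypergraphIdeal hC, ringKrullDim_of_isNoetherianRing, Nat.card_eq_fintype_card,
      ← card_compl_add_card C, Nat.cast_add, ← add_assoc, add_comm] at h
    exact ENat.WithBot.add_le_add_natCast_right_iff.mp h
  · have h := ringKrullDim_quotient_span_X_image (R := R) (C : Set σ)
    rw [← coe_compl, Set.ncard_coe_finset] at h
    rw [← h]
    have hle := (hypergraphIdeal_le_span_X_image_iff (R := R)).mpr hC.1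
    exact ringKrullDim_le_of_surjective _ (Ideal.Quotient.factor_surjective hle)

end Hypergraph

section CompleteMultipartite

variable {α : Type*} [DecidableEq α] {t s : ℕ} {Vs : Fin t → Finset α}

lemma edgeIdeal_eq_hypergraphIdeal (K : Type*) [Field K] (Vs : Fin t → Finset α) (s : ℕ) :
    edgeIdeal K Vs s = hypergraphIdeal K {e | IsEdge Vs s e} := by
  simp only [edgeIdeal, hypergraphIdeal, Set.image, Set.mem_ofPred_eq, eq_comm]

lemma isEdge_image_of_forall_mem (hdisj : ∀ i j, i ≠ j → Disjoint (Vs i) (Vs j))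
    {B : Finset (Fin t)} {f : B → α} (hf : ∀ i : B, f i ∈ Vs i) :
    IsEdge Vs #B (univ.image f) := by
  have side_unique {i : B} {j : Fin t} (hij : f i ∈ Vs j) : i = j :=
    not_not.mp fun hne ↦ disjoint_left.mp (hdisj i j hne) (hf i) hij
  refine ⟨?_, ?_, fun j ↦ card_le_one.mpr ?_⟩
  · exact image_subset_iff.mpr fun i _ ↦ mem_biUnion.mpr ⟨i, mem_univ _, hf i⟩
  · have hinj : Function.Injective f := fun i j hij ↦ Subtype.ext (side_unique (hij ▸ hf j))
    rw [card_image_of_injective _ hinj, card_univ, Fintype.card_coe]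
  · simp only [mem_inter, mem_image, mem_univ, true_and]
    rintro _ ⟨⟨i, rfl⟩, hi⟩ _ ⟨⟨k, rfl⟩, hk⟩
    rw [Subtype.ext ((side_unique hi).trans (side_unique hk).symm)]

lemma card_le_card_sides_of_isEdge {e : Finset α} (he : IsEdge Vs s e) :
    s ≤ #{i | ¬ Disjoint e (Vs i)} := by
  obtain ⟨hsub, hcard, hone⟩ := he
  have hcover : e ⊆ ({i | ¬ Disjoint e (Vs i)} : Finset (Fin t)).biUnion (e ∩ Vs ·) := by
    intro v hv
    obtain ⟨i, -, hi⟩ := mem_biUnion.mp (hsub hv)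
    simp only [mem_biUnion, mem_filter, mem_univ, true_and, mem_inter]
    exact ⟨i, not_disjoint_iff.mpr ⟨v, hv, hi⟩, hv, hi⟩
  calc s = #e := hcard.symm
    _ ≤ _ := card_le_card hcover
    _ ≤ #{i | ¬ Disjoint e (Vs i)} * 1 := card_biUnion_le_card_mul _ _ 1 fun i _ ↦ hone i
    _ = _ := mul_one _

lemma isVertexCover_isEdge_iff_card_lt (hdisj : ∀ i j, i ≠ j → Disjoint (Vs i) (Vs j))
    {C : Finset α} :
    IsVertexCover {e | IsEdge Vs s e} (C : Set α) ↔ #{i | ¬ Vs i ⊆ C} < s := by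
  constructor
  · intro hC
    by_contra! hs
    obtain ⟨B, hB, rfl⟩ := exists_subset_card_eq hs
    have hout (i : B) : ∃ v ∈ Vs i, v ∉ C := not_subset.mp (mem_filter.mp (hB i.2)).2
    choose f hf hfC using hout
    obtain ⟨v, hv, hvC⟩ := hC _ (isEdge_image_of_forall_mem hdisj hf)
    obtain ⟨i, -, rfl⟩ := mem_image.mp hv
    exact hfC i hvC
  · intro hs e he
    by_contra! hno
    have hsides : ∀ i ∈ univ, ¬ Disjoint e (Vs i) → ¬ Vs i ⊆ C := fun i _ hi hiC ↦
      hi (disjoint_left.mpr fun v hv hvi ↦ hno v hv (hiC hvi))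
    exact hs.not_ge ((card_le_card_sides_of_isEdge he).trans
      (card_le_card (monotone_filter_right _ hsides)))

lemma isMinimumVertexCover_biUnion (hdisj : ∀ i j, i ≠ j → Disjoint (Vs i) (Vs j))
    {B : Finset (Fin t)} (hB : #B + s = t + 1)
    (hmin : ∀ A : Finset (Fin t), #A = #B → ∑ i ∈ B, #(Vs i) ≤ ∑ i ∈ A, #(Vs i)) :
    IsMinimumVertexCover {e | IsEdge Vs s e} (B.biUnion Vs) := by
  refine ⟨(isVertexCover_isEdge_iff_card_lt hdisj).mpr ?_, fun D hD ↦ ?_⟩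
  · have hsub : ({i | ¬ Vs i ⊆ B.biUnion Vs} : Finset (Fin t)) ⊆ Bᶜ := fun i hi ↦
      mem_compl.mpr fun hiB ↦ (mem_filter.mp hi).2 (subset_biUnion_of_mem Vs hiB)
    have hle := card_le_card hsub
    have hBt : #B ≤ t := card_finset_fin_le B
    rw [card_compl, Fintype.card_fin] at hle
    omega
  · have hout : #{i | ¬ Vs i ⊆ D} < s := (isVertexCover_isEdge_iff_card_lt hdisj).mp hD
    have hsplit : #{i | Vs i ⊆ D} + #{i | ¬ Vs i ⊆ D} = t := by
      rw [card_filter_add_card_filter_not, card_univ, Fintype.card_fin]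
    obtain ⟨A, hA, hAB⟩ : ∃ A ⊆ ({i | Vs i ⊆ D} : Finset (Fin t)), #A = #B :=
      exists_subset_card_eq (by omega)
    calc #(B.biUnion Vs) = ∑ i ∈ B, #(Vs i) := card_biUnion fun i _ j _ ↦ hdisj i j
      _ ≤ ∑ i ∈ A, #(Vs i) := hmin A hAB
      _ = #(A.biUnion Vs) := (card_biUnion fun i _ j _ ↦ hdisj i j).symm
      _ ≤ #D := card_le_card (biUnion_subset.mpr fun i hi ↦ (mem_filter.mp (hA hi)).2)

lemma compl_biUnion_of_vertexSet_eq_univ [Fintype α]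
    (hdisj : ∀ i j, i ≠ j → Disjoint (Vs i) (Vs j)) (huniv : vertexSet Vs = univ)
    (B : Finset (Fin t)) : (B.biUnion Vs)ᶜ = Bᶜ.biUnion Vs := by
  refine IsCompl.compl_eq (isCompl_iff.mpr ⟨?_, codisjoint_iff.mpr ?_⟩)
  · simp only [disjoint_biUnion_left, disjoint_biUnion_right]
    intro i hi j hj
    exact hdisj j i fun hji ↦ mem_compl.mp hi (hji ▸ hj)
  · rw [sup_eq_union, ← union_biUnion, union_compl, top_eq_univ]
    exact huniv

end CompleteMultipartite

/-- `B` selects `t - s + 1` sides of least total size; `hB` avoids truncated subtraction. -/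
theorem height_and_dim_of_balanced_general
    (K : Type*) [Field K] {α : Type*} [DecidableEq α] [Fintype α] {t s : ℕ}
    (Vs : Fin t → Finset α) (hdisj : ∀ i j : Fin t, i ≠ j → Disjoint (Vs i) (Vs j))
    (huniv : vertexSet Vs = univ) (B : Finset (Fin t)) (hB : #B + s = t + 1)
    (hmin : ∀ A : Finset (Fin t), #A = #B → ∑ i ∈ B, #(Vs i) ≤ ∑ i ∈ A, #(Vs i)) :
    idealHeight (edgeIdeal K Vs s) = (∑ i ∈ B, #(Vs i) : ℕ) ∧
      ringKrullDim (MvPolynomial α K ⧸ edgeIdeal K Vs s) = (∑ i ∈ Bᶜ, #(Vs i) : ℕ) := by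
  have hcover := isMinimumVertexCover_biUnion hdisj hB hmin
  have hcard (A : Finset (Fin t)) : #(A.biUnion Vs) = ∑ i ∈ A, #(Vs i) :=
    card_biUnion fun i _ j _ ↦ hdisj i j
  rw [idealHeight_eq_height, edgeIdeal_eq_hypergraphIdeal]
  constructor
  · rw [height_hypergraphIdeal hcover, hcard]
  · rw [ringKrullDim_quotient_hypergraphIdeal hcover, ringKrullDim_eq_zero_of_field, zero_add,
      compl_biUnion_of_vertexSet_eq_univ hdisj huniv, hcard]

/-- If the complete `s`-uniform `t`-partite hypergraph is `m`-balanced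
(every side has `m` vertices, `m ≥ 1`), then the height of its edge ideal is
`m(t - s + 1)` and the Krull dimension of `R/I(H)` is `m(s - 1)`. -/
theorem height_and_dim_of_balanced
    (K : Type*) [Field K] {α : Type*} [DecidableEq α] [Fintype α] {t s : ℕ}
    (hs : 2 ≤ s) (hst : s ≤ t)
    (Vs : Fin t → Finset α)
    (hdisj : ∀ i j : Fin t, i ≠ j → Disjoint (Vs i) (Vs j))
    (hne : ∀ i : Fin t, (Vs i).Nonempty)
    (huniv : vertexSet Vs = Finset.univ)
    (m : ℕ) (hm : 1 ≤ m) (hbal : ∀ i : Fin t, (Vs i).card = m) :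
    idealHeight (edgeIdeal K Vs s) = (m * (t - s + 1) : ℕ) ∧
      ringKrullDim (MvPolynomial α K ⧸ edgeIdeal K Vs s) = (m * (s - 1) : ℕ) := by
  obtain ⟨B, -, hB⟩ : ∃ B ⊆ (univ : Finset (Fin t)), #B = t - s + 1 :=
    exists_subset_card_eq (by rw [card_univ, Fintype.card_fin]; omega)
  have hBc : #Bᶜ = s - 1 := by rw [card_compl, Fintype.card_fin]; omega
  have hsum (A : Finset (Fin t)) : ∑ i ∈ A, #(Vs i) = m * #A := by simp [hbal, mul_comm]
  have h := height_and_dim_of_balanced_general K Vs hdisj huniv B (s := s) (by omega)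
    fun A hA ↦ by rw [hsum, hsum, hA]
  rwa [hsum, hsum, hB, hBc] at h
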